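/- Let F be a field of characteristic 2 with [F : F²] = 2ⁿ for some n ≥ 2, and let m ∈ {1,…,n−1}. Then any collection of 2^{n−m+1} − 1 anisotropic bilinear n-fold Pfister forms over F has a common bilinear m-fold Pfister factor; that is, there is a bilinear m-fold Pfister form ρ and bilinear (n−m)-fold Pfister forms π₁,…,π_N with Bₗ ≅ ρ ⊗ πₗ for all ℓ. -/

import Mathlib

/-- The subfield of squares `F²` of a field of characteristic 2. -/
def sqSubfield (F : Type*) [Field F] [CharP F 2] : Subfield F where
  carrier := {x | ∃ y : F, y ^ 2 = x}
  mul_mem' := by rintro a b ⟨y, rfl⟩ ⟨z, rfl⟩; exact ⟨y * z, by ring⟩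
  one_mem' := ⟨1, one_pow 2⟩
  add_mem' := by
    rintro a b ⟨y, rfl⟩ ⟨z, rfl⟩
    exact ⟨y + z, by rw [add_sq]; linear_combination (y*z) * (CharP.cast_eq_zero F 2)⟩
  zero_mem' := ⟨0, by ring⟩
  neg_mem' := by rintro a ⟨y, rfl⟩; exact ⟨y, (CharTwo.neg_eq _).symm⟩
  inv_mem' := by rintro a ⟨y, rfl⟩; exact ⟨y⁻¹, by rw [inv_pow]⟩

/-- The monomial `β₁^{d₁} ⋯ βₙ^{dₙ}`. -/
def mono {R : Type*} [CommRing R] {n : ℕ} (β : Fin n → R) (d : Fin n → Bool) : R :=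
  ∏ i, if d i then β i else 1

/-- The diagonal bilinear `n`-fold Pfister form `⟨⟨β₁,…,βₙ⟩⟩_b`. -/
def bPf (F : Type*) [Field F] {n : ℕ} (β : Fin n → F) (v w : (Fin n → Bool) → F) : F :=
  ∑ d, mono β d * v d * w d

/-- Pure part of the bilinear Pfister form. -/
def bPfPure (F : Type*) [Field F] {n : ℕ} (β : Fin n → F)
    (v w : {d : Fin n → Bool // d ≠ fun _ => false} → F) : F :=
  ∑ d, mono β d.1 * v d * w d

/-- Anisotropy of a bilinear form. -/
def BAniso (F : Type*) [Field F] {V : Type*} [AddCommGroup V] [Module F V]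
    (B : V → V → F) : Prop :=
  ∀ v : V, v ≠ 0 → B v v ≠ 0

/-- Isometry of bilinear forms. -/
def BilinIsom (F : Type*) [Field F] {V W : Type*} [AddCommGroup V] [Module F V]
    [AddCommGroup W] [Module F W] (B₁ : V → V → F) (B₂ : W → W → F) : Prop :=
  ∃ e : V ≃ₗ[F] W, ∀ v w, B₂ (e v) (e w) = B₁ v w

/-- Isometry of quadratic forms (given as value functions). -/
def QuadIsom (F : Type*) [Field F] {V W : Type*} [AddCommGroup V] [Module F V]
    [AddCommGroup W] [Module F W] (q₁ : V → F) (q₂ : W → F) : Prop :=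
  ∃ e : V ≃ₗ[F] W, ∀ v, q₂ (e v) = q₁ v

/-- The quadratic Pfister form `⟨⟨β₁,…,β_m, a]]` as a value function. -/
def qPf (R : Type*) [CommRing R] {m : ℕ} (β : Fin m → R) (a : R)
    (x : (Fin m → Bool) → R × R) : R :=
  ∑ e, mono β e * ((x e).1 ^ 2 + (x e).1 * (x e).2 + a * (x e).2 ^ 2)

/-- Minimal index where `d` is `true`. -/
noncomputable def minIdx {n : ℕ} (d : Fin n → Bool) (hd : d ≠ fun _ => false) : Fin n :=
  (Finset.univ.filter fun i => d i = true).min' (by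
    obtain ⟨i, hi⟩ := Function.ne_iff.mp hd
    exact ⟨i, Finset.mem_filter.mpr ⟨Finset.mem_univ i, by simpa using hi⟩⟩)

/-- Remove the `ℓ`-th entry from a tuple. -/
def removeIdx {R : Type*} {n : ℕ} (α : Fin n → R) (ℓ : Fin n) (i : Fin (n - 1)) : R :=
  if h : (i : ℕ) < (ℓ : ℕ) then α ⟨i, by omega⟩ else α ⟨(i : ℕ) + 1, by omega⟩

/-- First `n-1` entries of a tuple. -/
def front {R : Type*} {n : ℕ} (α : Fin n → R) (i : Fin (n - 1)) : R :=
  α ⟨i, by omega⟩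

/-- Last entry of a tuple (junk value `0` if the tuple is empty). -/
def qlast {R : Type*} [CommRing R] {n : ℕ} (α : Fin n → R) : R :=
  if h : n = 0 then 0 else α ⟨n - 1, by omega⟩

/-!
Fix a form `B = ⟨⟨β₁,…,βₙ⟩⟩_b`. It is anisotropic iff the monomials `β^d` are linearly independent
over `F²`; as `[F : F²] = 2ⁿ`, they then form a basis, and `v ↦ B(v, v)` is a Frobenius-semilinear
bijection onto `F`. Let `s : F → F²` be the coordinate functional of the monomial `1`. Since
`β^d β^e` is a square times the monomial of the symmetric difference of `d` and `e`,
`s (B(v, v) B(w, w)) = B(v, w)²`. So `s` determines `B` up to isometry, and any slots `γ₁,…,γₙ` all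
of whose nontrivial monomials lie in `ker s` give a form isometric to `B`.

To split off a common factor from several forms it therefore suffices to find slots whose nontrivial
monomials are killed by all the functionals `s_ℓ`. They are found one at a time: after `k` of them,
the next one can be any nonzero solution of `N · 2ᵏ` linear equations over `F²` in the
`2ⁿ`-dimensional space `F`, and `N · 2ᵏ < 2ⁿ` for `k < m`.
-/

section Mono

variable {R : Type*} [CommRing R] {k : ℕ}

lemma mono_bot (β : Fin k → R) : mono β ⊥ = 1 := by
  simp [mono]

lemma mono_ne_zero [IsDomain R] {β : Fin k → R} (hβ : ∀ i, β i ≠ 0) (d : Fin k → Bool) :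
    mono β d ≠ 0 := by
  refine Finset.prod_ne_zero_iff.mpr fun i _ => ?_
  split_ifs
  exacts [hβ i, one_ne_zero]

lemma mono_mul_mono (β : Fin k → R) (d e : Fin k → Bool) :
    mono β d * mono β e = mono β (d ⊓ e) ^ 2 * mono β (symmDiff d e) := by
  simp only [mono, ← Finset.prod_mul_distrib, ← Finset.prod_pow]
  refine Finset.prod_congr rfl fun i _ => ?_
  cases hd : d i <;> cases he : e i <;> simp [symmDiff, sdiff_eq, sq, hd, he]

lemma mono_snoc (β : Fin k → R) (y : R) (d : Fin (k + 1) → Bool) :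
    mono (Fin.snoc β y : Fin (k + 1) → R) d =
      mono β (d ∘ Fin.castSucc) * if d (Fin.last k) then y else 1 := by
  simp [mono, Fin.prod_univ_castSucc]

end Mono

section SquareSubfield

variable (F : Type*) [Field F] [CharP F 2]

/-- The Frobenius `a ↦ a ^ 2` as an isomorphism of `F` onto its subfield of squares. It is the
twist along which the value maps of bilinear Pfister forms are semilinear. -/
noncomputable def sqEquiv : F ≃+* sqSubfield F :=
  RingEquiv.ofBijective ((frobenius F 2).codRestrict (sqSubfield F) fun a => ⟨a, rfl⟩)
    ⟨RingHom.injective _, fun ⟨_, a, ha⟩ => ⟨a, Subtype.ext ha⟩⟩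

variable {F}

lemma coe_sqEquiv (a : F) : (sqEquiv F a : F) = a ^ 2 := rfl

lemma sqEquiv_smul (a x : F) : sqEquiv F a • x = a ^ 2 * x := rfl

instance : RingHomInvPair (sqEquiv F : F →+* sqSubfield F) (sqEquiv F).symm :=
  .of_ringEquiv _

instance : RingHomInvPair ((sqEquiv F).symm : sqSubfield F →+* F) (sqEquiv F) :=
  .of_ringEquiv_symm _

end SquareSubfield

section ValueMap

variable {F : Type*} [Field F] [CharP F 2] {k : ℕ}

/-- The map `v ↦ B(v, v)` for `B = ⟨⟨β₁,…,βₖ⟩⟩_b`, see `valueMap_eq_bPf`. In characteristic 2 it is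
semilinear over the Frobenius `F ≃ F²`. -/
noncomputable def valueMap (β : Fin k → F) :
    ((Fin k → Bool) → F) →ₛₗ[(sqEquiv F : F →+* sqSubfield F)] F where
  toFun v := ∑ d, sqEquiv F (v d) • mono β d
  map_add' v w := by simp [add_smul, Finset.sum_add_distrib]
  map_smul' a v := by simp [mul_smul, Finset.smul_sum]

lemma valueMap_apply (β : Fin k → F) (v : (Fin k → Bool) → F) :
    valueMap β v = ∑ d, sqEquiv F (v d) • mono β d := rfl

lemma valueMap_eq_bPf (β : Fin k → F) (v : (Fin k → Bool) → F) :
    valueMap β v = bPf F β v v :=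
  Finset.sum_congr rfl fun d _ => by rw [sqEquiv_smul]; ring

lemma valueMap_eq_linearCombination_comp (β : Fin k → F) :
    ⇑(valueMap β) = Fintype.linearCombination (sqSubfield F) (mono β) ∘
      (Equiv.piCongrRight fun _ => (sqEquiv F).toEquiv) := rfl

lemma injective_valueMap_iff {β : Fin k → F} :
    Function.Injective (valueMap β) ↔ LinearIndependent (sqSubfield F) (mono β) := by
  rw [valueMap_eq_linearCombination_comp, EquivLike.injective_comp,
    linearIndependent_iff_injective_fintypeLinearCombination]

lemma bijective_valueMap {β : Fin k → F} (hβ : LinearIndependent (sqSubfield F) (mono β))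
    (hF : Module.finrank (sqSubfield F) F = 2 ^ k) : Function.Bijective (valueMap β) := by
  refine ⟨injective_valueMap_iff.mpr hβ, ?_⟩
  have : Module.Finite (sqSubfield F) F := Module.finite_of_finrank_pos (by simp [hF])
  have hspan : Submodule.span (sqSubfield F) (Set.range (mono β)) = ⊤ :=
    hβ.span_eq_top_of_card_eq_finrank' (by simp [hF])
  rw [valueMap_eq_linearCombination_comp, EquivLike.surjective_comp, ← LinearMap.range_eq_top,
    Fintype.range_linearCombination, hspan]

lemma BAniso.linearIndependent_mono {β : Fin k → F} (hβ : BAniso F (bPf F β)) :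
    LinearIndependent (sqSubfield F) (mono β) := by
  refine injective_valueMap_iff.mp <| (injective_iff_map_eq_zero _).mpr fun v hv => ?_
  contrapose! hv
  exact valueMap_eq_bPf β v ▸ hβ v hv

end ValueMap

section Adapted

variable {F : Type*} [Field F] [CharP F 2] {k n : ℕ}

/-- The `F²`-linear functional `s` on `F` is adapted to the nonzero slots `β` if it takes the value
`1` at `1` and `0` at every other monomial in `β`. Up to isometry, `s` then determines the form
`⟨⟨β₁,…,βₖ⟩⟩_b`, see `IsAdapted.bilinIsom`. -/
structure IsAdapted (s : F →ₗ[sqSubfield F] sqSubfield F) (β : Fin k → F) : Prop where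
  ne_zero : ∀ i, β i ≠ 0
  map_one : s 1 = 1
  map_mono : ∀ d ≠ ⊥, s (mono β d) = 0

lemma exists_isAdapted {β : Fin k → F} (hβ₀ : ∀ i, β i ≠ 0)
    (hβ : LinearIndependent (sqSubfield F) (mono β)) : ∃ s, IsAdapted s β := by
  obtain ⟨g, hg⟩ := LinearMap.exists_leftInverse_of_injective _
    (LinearMap.ker_eq_bot.mpr hβ.fintypeLinearCombination_injective)
  have hg_mono (d) : g (mono β d) = Pi.single d 1 := by
    simpa using LinearMap.congr_fun hg (Pi.single d 1)
  refine ⟨LinearMap.proj ⊥ ∘ₗ g, hβ₀, ?_, fun d hd => ?_⟩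
  · rw [← mono_bot β, LinearMap.comp_apply, hg_mono, LinearMap.proj_apply, Pi.single_eq_same]
  · rw [LinearMap.comp_apply, hg_mono, LinearMap.proj_apply, Pi.single_eq_of_ne hd.symm]

namespace IsAdapted

variable {s : F →ₗ[sqSubfield F] sqSubfield F} {β : Fin k → F}

lemma map_mono_mul_mono (h : IsAdapted s β) (d e : Fin k → Bool) :
    s (mono β d * mono β e) = if d = e then sqEquiv F (mono β d) else 0 := by
  rw [mono_mul_mono, ← sqEquiv_smul, map_smul]
  split_ifs with hde
  · rw [hde, symmDiff_self, mono_bot, h.map_one, inf_idem, smul_eq_mul, mul_one]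
  · rw [h.map_mono _ (mt symmDiff_eq_bot.mp hde), smul_zero]

lemma map_valueMap_mul_valueMap (h : IsAdapted s β) (v w : (Fin k → Bool) → F) :
    s (valueMap β v * valueMap β w) = sqEquiv F (bPf F β v w) :=
  calc s (valueMap β v * valueMap β w)
    _ = ∑ d, ∑ e, sqEquiv F (v d * w e) * s (mono β d * mono β e) := by
      simp only [valueMap_apply, Finset.sum_mul_sum, map_sum, smul_mul_smul_comm, map_smul,
        map_mul, smul_eq_mul]
    _ = ∑ d, sqEquiv F (v d * w d) * sqEquiv F (mono β d) := by
      simp only [h.map_mono_mul_mono, mul_ite, mul_zero, Finset.sum_ite_eq, Finset.mem_univ,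
        if_true]
    _ = sqEquiv F (bPf F β v w) := by
      simp only [bPf, map_sum, map_mul]
      exact Finset.sum_congr rfl fun d _ => by ring

lemma linearIndependent_mono (h : IsAdapted s β) :
    LinearIndependent (sqSubfield F) (mono β) := by
  refine injective_valueMap_iff.mp <| (injective_iff_map_eq_zero _).mpr fun v hv => ?_
  funext d
  have hvd : bPf F β v (Pi.single d 1) = 0 := by
    rw [← map_eq_zero (sqEquiv F), ← h.map_valueMap_mul_valueMap, hv, zero_mul, map_zero]
  simpa [bPf, Pi.single_apply, mono_ne_zero h.ne_zero d] using hvd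

theorem bilinIsom {γ : Fin n → F} (hβ : IsAdapted s β) (hγ : IsAdapted s γ)
    (hk : Module.finrank (sqSubfield F) F = 2 ^ k) (hn : Module.finrank (sqSubfield F) F = 2 ^ n) :
    BilinIsom F (bPf F β) (bPf F γ) := by
  let eβ := LinearEquiv.ofBijective _ (bijective_valueMap hβ.linearIndependent_mono hk)
  let eγ := LinearEquiv.ofBijective _ (bijective_valueMap hγ.linearIndependent_mono hn)
  let e : ((Fin k → Bool) → F) ≃ₗ[F] ((Fin n → Bool) → F) := eβ.trans eγ.symm
  have he (v) : valueMap γ (e v) = valueMap β v := eγ.apply_symm_apply (eβ v)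
  refine ⟨e, fun v w => (sqEquiv F).injective ?_⟩
  rw [← hγ.map_valueMap_mul_valueMap, ← hβ.map_valueMap_mul_valueMap, he, he]

lemma snoc (h : IsAdapted s β) {y : F} (hy₀ : y ≠ 0) (hy : ∀ d, s (mono β d * y) = 0) :
    IsAdapted s (Fin.snoc β y : Fin (k + 1) → F) := by
  refine ⟨fun i => ?_, h.map_one, fun d hd => ?_⟩
  · cases i using Fin.lastCases <;> simp [hy₀, h.ne_zero]
  · rw [mono_snoc]
    cases hlast : d (Fin.last k) with
    | true => exact hy _
    | false =>
      have hinit : d ∘ Fin.castSucc ≠ ⊥ := fun h₀ =>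
        hd <| funext <| Fin.lastCases hlast fun i => congrFun h₀ i
      simpa using h.map_mono _ hinit

end IsAdapted

variable {ι : Type*} [Fintype ι] {s : ι → F →ₗ[sqSubfield F] sqSubfield F}

lemma exists_isAdapted_snoc {β : Fin k → F} (hβ : ∀ l, IsAdapted (s l) β)
    (hcard : Fintype.card ι * 2 ^ k < Module.finrank (sqSubfield F) F) :
    ∃ y, ∀ l, IsAdapted (s l) (Fin.snoc β y : Fin (k + 1) → F) := by
  have : Module.Finite (sqSubfield F) F := Module.finite_of_finrank_pos (by omega)
  let f : F →ₗ[sqSubfield F] (ι × (Fin k → Bool) → sqSubfield F) :=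
    LinearMap.pi fun p => s p.1 ∘ₗ LinearMap.mulLeft (sqSubfield F) (mono β p.2)
  have hf : f.ker ≠ ⊥ := f.ker_ne_bot_of_finrank_lt (by simpa using hcard)
  obtain ⟨y, hy, hy₀⟩ := Submodule.exists_mem_ne_zero_of_ne_bot hf
  exact ⟨y, fun l => (hβ l).snoc hy₀ fun d => congrFun hy (l, d)⟩

theorem exists_isAdapted_take_eq {β : Fin k → F} (hβ : ∀ l, IsAdapted (s l) β) (hkn : k ≤ n)
    (hcard : Fintype.card ι * 2 ^ n < 2 * Module.finrank (sqSubfield F) F) :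
    ∃ γ : Fin n → F, Fin.take k hkn γ = β ∧ ∀ l, IsAdapted (s l) γ := by
  induction n, hkn using Nat.le_induction with
  | base => exact ⟨β, Fin.take_eq_self β, hβ⟩
  | succ n hkn ih =>
    rw [pow_succ, ← mul_assoc] at hcard
    obtain ⟨γ, rfl, hγ⟩ := ih (by omega)
    obtain ⟨y, hy⟩ := exists_isAdapted_snoc hγ (by lia)
    exact ⟨Fin.snoc γ y, funext fun i => Fin.snoc_castSucc _ _ (Fin.castLE hkn i), hy⟩

theorem IsAdapted.exists_bilinIsom_append {s : F →ₗ[sqSubfield F] sqSubfield F} {m : ℕ}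
    {β : Fin n → F} {ρ : Fin m → F} (hβ : IsAdapted s β) (hρ : IsAdapted s ρ) (hmn : m ≤ n)
    (hF : Module.finrank (sqSubfield F) F = 2 ^ n) :
    ∃ π : Fin (n - m) → F, (∀ i, π i ≠ 0) ∧ BilinIsom F (bPf F β) (bPf F (Fin.append ρ π)) := by
  have hF' : Module.finrank (sqSubfield F) F = 2 ^ (m + (n - m)) := by
    rw [hF, Nat.add_sub_cancel' hmn]
  obtain ⟨γ, rfl, hγ⟩ := exists_isAdapted_take_eq (s := fun _ : Unit => s) (fun _ => hρ)
    (Nat.le_add_right m (n - m)) (by simp [hF'])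
  refine ⟨fun i => γ (Fin.natAdd m i), fun i => (hγ ()).ne_zero _, ?_⟩
  have happend : Fin.append (Fin.take m _ γ) (fun i => γ (Fin.natAdd m i)) = γ :=
    Fin.append_castAdd_natAdd
  exact happend.symm ▸ hβ.bilinIsom (hγ ()) hF hF'

end Adapted

/-- over a field of characteristic 2 with `[F:F²] = 2ⁿ`, any
`2^(n-m+1) - 1` anisotropic bilinear `n`-fold Pfister forms have a common
bilinear `m`-fold Pfister factor. -/
theorem stmt_4 (F : Type*) [Field F] [CharP F 2] (n m : ℕ)
    (hn : 2 ≤ n) (hm1 : 1 ≤ m) (hm2 : m ≤ n - 1)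
    (hrk : Module.finrank (sqSubfield F) F = 2 ^ n)
    (B : Fin (2 ^ (n - m + 1) - 1) → Fin n → F)
    (hB0 : ∀ ℓ i, B ℓ i ≠ 0)
    (hBa : ∀ ℓ, BAniso F (bPf F (B ℓ))) :
    ∃ ρ : Fin m → F, (∀ i, ρ i ≠ 0) ∧
      ∀ ℓ, ∃ π : Fin (n - m) → F, (∀ i, π i ≠ 0) ∧
        BilinIsom F (bPf F (B ℓ)) (bPf F (Fin.append ρ π)) := by
  choose s hs using fun ℓ => exists_isAdapted (hB0 ℓ) (hBa ℓ).linearIndependent_mono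
  have hcard : (2 ^ (n - m + 1) - 1) * 2 ^ m < 2 * 2 ^ n := by
    calc (2 ^ (n - m + 1) - 1) * 2 ^ m < 2 ^ (n - m + 1) * 2 ^ m := by gcongr; simp
      _ = 2 * 2 ^ n := by rw [← pow_add, ← pow_succ']; congr 1; omega
  have hnil (ℓ) : IsAdapted (s ℓ) (Fin.elim0 : Fin 0 → F) :=
    ⟨fun i => i.elim0, (hs ℓ).map_one, fun d hd => (hd (Subsingleton.elim d ⊥)).elim⟩
  obtain ⟨ρ, -, hρ⟩ := exists_isAdapted_take_eq hnil m.zero_le (by simpa [hrk] using hcard)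
  let ℓ₀ : Fin (2 ^ (n - m + 1) - 1) := ⟨0, Nat.sub_pos_of_lt (Nat.one_lt_two_pow (by simp))⟩
  exact ⟨ρ, (hρ ℓ₀).ne_zero, fun ℓ => (hs ℓ).exists_bilinIsom_append (hρ ℓ) (by omega) hrk⟩
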